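/- arXiv:math/0108144 — 3 statements merged into one kernel-verified Lean document; each statement's English description precedes it below -/
import Mathlib

section
/- Formal Poincaré Lemma (full exactness): Define Ω^p = R ⊗_ℂ ⋀^p(ℂ^n) (the p-forms with formal power series coefficients) and the ℂ-linear exterior derivative d : Ω^p → Ω^{p+1} by d(g ⊗ ω) = Σ_{i=1}^n ∂ᵢ(g) ⊗ (eᵢ ∧ ω), where e₁,…,eₙ is the standard basis of ℂ^n. Then the sequence 0 → ℂ → R = Ω^0 →^d Ω^1 →^d ⋯ →^d Ω^n → 0 is exact: the kernel of d : Ω^0 → Ω^1 consists exactly of the constant series ℂ·1, for each 1 ≤ p ≤ n−1 the kernel of d : Ω^p → Ω^{p+1} equals the image of d : Ω^{p−1} → Ω^p, and d : Ω^{n−1} → Ω^n is surjective. -/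
noncomputable section

open TensorProduct

/-- The formal partial derivative `∂ᵢ` on `ℂ[[x₁,…,xₙ]]`, determined by
`coeff α (∂ᵢ g) = (α i + 1) • coeff (α + eᵢ) g`. -/
def pd {σ : Type*} (i : σ) (g : MvPowerSeries σ ℂ) : MvPowerSeries σ ℂ :=
  fun α => ((α i : ℂ) + 1) * MvPowerSeries.coeff (α + Finsupp.single i 1) g

lemma coeff_pd {σ : Type*} (i : σ) (g : MvPowerSeries σ ℂ) (α : σ →₀ ℕ) :
    MvPowerSeries.coeff α (pd i g) =
      ((α i : ℂ) + 1) * MvPowerSeries.coeff (α + Finsupp.single i 1) g := rfl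

/-- `∂ᵢ` as a `ℂ`-linear endomorphism of `R = ℂ[[x₁,…,xₙ]]`. -/
def pdL (n : ℕ) (i : Fin n) : MvPowerSeries (Fin n) ℂ →ₗ[ℂ] MvPowerSeries (Fin n) ℂ where
  toFun := pd i
  map_add' a b := by ext α; simp [coeff_pd, mul_add]
  map_smul' c a := by ext α; simp [coeff_pd]; ring

/-- `Ω^p = R ⊗_ℂ ⋀^p(ℂ^n)`, the `p`-forms with formal power series coefficients. -/
abbrev Omega (n p : ℕ) : Type _ :=
  MvPowerSeries (Fin n) ℂ ⊗[ℂ] (⋀[ℂ]^p (Fin n → ℂ))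

/-- Left exterior multiplication by the standard basis vector `eᵢ`,
as a map `⋀^p(ℂ^n) → ⋀^{p+1}(ℂ^n)`. -/
def wedgeE (n : ℕ) (i : Fin n) (p : ℕ) :
    (⋀[ℂ]^p (Fin n → ℂ)) →ₗ[ℂ] (⋀[ℂ]^(p + 1) (Fin n → ℂ)) where
  toFun ω := ⟨ExteriorAlgebra.ι ℂ (Pi.single i 1 : Fin n → ℂ) * (ω : ExteriorAlgebra ℂ (Fin n → ℂ)), by
    have h := Submodule.mul_mem_mul
      (LinearMap.mem_range_self (ExteriorAlgebra.ι ℂ (M := Fin n → ℂ)) (Pi.single i 1)) ω.2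
    rwa [← pow_succ'] at h⟩
  map_add' a b := Subtype.ext (by push_cast; exact mul_add _ _ _)
  map_smul' c a := Subtype.ext (by push_cast; exact mul_smul_comm c _ _)

/-- The exterior derivative `d : Ω^p → Ω^{p+1}`, `d(g ⊗ ω) = Σᵢ ∂ᵢ(g) ⊗ (eᵢ ∧ ω)`. -/
def D (n p : ℕ) : Omega n p →ₗ[ℂ] Omega n (p + 1) :=
  ∑ i : Fin n, TensorProduct.map (pdL n i) (wedgeE n i p)

/-- `1 ∈ ⋀^0(ℂ^n)`. -/
def one0 (n : ℕ) : ⋀[ℂ]^0 (Fin n → ℂ) :=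
  ⟨1, by exact Submodule.one_le.mp (le_of_eq (pow_zero _).symm)⟩

section PoincareAux

variable {n : ℕ}




/-- standard basis vector in the exterior algebra -/
def ee (i : Fin n) : ExteriorAlgebra ℂ (Fin n → ℂ) :=
  ExteriorAlgebra.ι ℂ (Pi.single i 1 : Fin n → ℂ)

/-- contraction with the dual basis vector -/
def cc (i : Fin n) : ExteriorAlgebra ℂ (Fin n → ℂ) →ₗ[ℂ] ExteriorAlgebra ℂ (Fin n → ℂ) :=
  CliffordAlgebra.contractLeft (Q := (0 : QuadraticForm ℂ (Fin n → ℂ))) (LinearMap.proj i)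

lemma cc_ι_mul (i : Fin n) (v : Fin n → ℂ) (x : ExteriorAlgebra ℂ (Fin n → ℂ)) :
    cc i (ExteriorAlgebra.ι ℂ v * x) = v i • x - ExteriorAlgebra.ι ℂ v * cc i x :=
  CliffordAlgebra.contractLeft_ι_mul _ _ _

lemma cc_algebraMap (i : Fin n) (r : ℂ) :
    cc i (algebraMap ℂ (ExteriorAlgebra ℂ (Fin n → ℂ)) r) = 0 :=
  CliffordAlgebra.contractLeft_algebraMap _ _ _

lemma cc_zero_mem (i : Fin n) (x : ExteriorAlgebra ℂ (Fin n → ℂ))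
    (hx : x ∈ ⋀[ℂ]^0 (Fin n → ℂ)) : cc i x = 0 := by
  rw [ExteriorAlgebra.exteriorPower, pow_zero] at hx
  obtain ⟨r, rfl⟩ := Submodule.mem_one.1 hx
  exact cc_algebraMap i r

lemma cc_mem (i : Fin n) (p : ℕ) : ∀ x : ExteriorAlgebra ℂ (Fin n → ℂ),
    x ∈ ⋀[ℂ]^(p+1) (Fin n → ℂ) → cc i x ∈ ⋀[ℂ]^p (Fin n → ℂ) := by
  induction p with
  | zero =>
    intro x hx
    rw [ExteriorAlgebra.exteriorPower, pow_succ'] at hx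
    refine Submodule.mul_induction_on hx ?_ ?_
    · rintro _ ⟨v, rfl⟩ y hy
      rw [cc_ι_mul, cc_zero_mem i y hy, mul_zero, sub_zero]
      exact Submodule.smul_mem _ _ hy
    · intro a b ha hb
      rw [map_add]; exact Submodule.add_mem _ ha hb
  | succ p ih =>
    intro x hx
    rw [ExteriorAlgebra.exteriorPower, pow_succ'] at hx
    refine Submodule.mul_induction_on hx ?_ ?_
    · rintro _ ⟨v, rfl⟩ y hy
      rw [cc_ι_mul]
      refine Submodule.sub_mem _ (Submodule.smul_mem _ _ hy) ?_
      have := Submodule.mul_mem_mul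
        (LinearMap.mem_range_self (ExteriorAlgebra.ι ℂ (M := Fin n → ℂ)) v) (ih y hy)
      rwa [ExteriorAlgebra.exteriorPower, ← pow_succ'] at this
    · intro a b ha hb
      rw [map_add]; exact Submodule.add_mem _ ha hb

lemma sum_ee (v : Fin n → ℂ) : ∑ i, v i • ee i = ExteriorAlgebra.ι ℂ v := by
  simp only [ee, ← map_smul, ← map_sum]
  congr 1
  ext j
  simp [Finset.sum_apply, Pi.single_apply]

lemma sum_ee_cc (p : ℕ) : ∀ x : ExteriorAlgebra ℂ (Fin n → ℂ),
    x ∈ ⋀[ℂ]^p (Fin n → ℂ) → ∑ i, ee i * cc i x = (p : ℂ) • x := by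
  induction p with
  | zero =>
    intro x hx
    simp [cc_zero_mem _ x hx]
  | succ p ih =>
    intro x hx
    rw [ExteriorAlgebra.exteriorPower, pow_succ'] at hx
    refine Submodule.mul_induction_on hx ?_ ?_
    · rintro _ ⟨v, rfl⟩ y hy
      have h1 : ∀ i, ee i * cc i (ExteriorAlgebra.ι ℂ v * y) =
          (v i • ee i) * y + ExteriorAlgebra.ι ℂ v * (ee i * cc i y) := by
        intro i
        have h2 : ee i * ExteriorAlgebra.ι ℂ v = - (ExteriorAlgebra.ι ℂ v * ee i) :=
          eq_neg_of_add_eq_zero_left (ExteriorAlgebra.ι_add_mul_swap _ _)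
        rw [cc_ι_mul, mul_sub, ← mul_assoc, h2]
        simp [mul_assoc]
      simp only [h1, Finset.sum_add_distrib, ← Finset.sum_mul, ← Finset.mul_sum, sum_ee]
      rw [ih y hy]
      push_cast
      rw [mul_smul_comm, add_smul, one_smul, add_comm]
    · intro a b ha hb
      simp only [map_add, mul_add, Finset.sum_add_distrib, ha, hb, smul_add]

/-- graded contraction -/
def ct (n : ℕ) (i : Fin n) (p : ℕ) :
    (⋀[ℂ]^(p + 1) (Fin n → ℂ)) →ₗ[ℂ] (⋀[ℂ]^p (Fin n → ℂ)) :=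
  (cc i).restrict (cc_mem i p)

lemma coe_ct (i : Fin n) (p : ℕ) (x : ⋀[ℂ]^(p + 1) (Fin n → ℂ)) :
    (ct n i p x : ExteriorAlgebra ℂ (Fin n → ℂ)) = cc i x := rfl

lemma coe_wedgeE (i : Fin n) (p : ℕ) (x : ⋀[ℂ]^p (Fin n → ℂ)) :
    (wedgeE n i p x : ExteriorAlgebra ℂ (Fin n → ℂ)) = ee i * x := rfl

lemma anti (i j : Fin n) (p : ℕ) (x : ⋀[ℂ]^(p + 1) (Fin n → ℂ)) :
    ct n i (p+1) (wedgeE n j (p+1) x) =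
      (if i = j then x else 0) - wedgeE n j p (ct n i p x) := by
  apply Subtype.ext
  rw [coe_ct, coe_wedgeE, ee, cc_ι_mul]
  push_cast
  rw [coe_wedgeE, coe_ct, ee, Pi.single_apply]
  split_ifs <;> simp

lemma anti0 (i j : Fin n) (x : ⋀[ℂ]^0 (Fin n → ℂ)) :
    ct n i 0 (wedgeE n j 0 x) = if i = j then x else 0 := by
  apply Subtype.ext
  rw [coe_ct, coe_wedgeE, ee, cc_ι_mul, cc_zero_mem i _ x.2, Pi.single_apply]
  split_ifs <;> simp

lemma sum_wedge_ct (p : ℕ) (x : ⋀[ℂ]^(p + 1) (Fin n → ℂ)) :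
    ∑ i, wedgeE n i p (ct n i p x) = ((p : ℂ) + 1) • x := by
  apply Subtype.ext
  have := sum_ee_cc (p+1) _ x.2
  push_cast at this ⊢
  exact this

lemma wedge_swap (i j : Fin n) (p : ℕ) (x : ⋀[ℂ]^p (Fin n → ℂ)) :
    wedgeE n i (p+1) (wedgeE n j p x) = - wedgeE n j (p+1) (wedgeE n i p x) := by
  apply Subtype.ext
  push_cast
  simp only [coe_wedgeE, ← mul_assoc, ← neg_mul]
  have h : ee i * ee j = - ee j * ee i := by
    rw [neg_mul]
    exact eq_neg_of_add_eq_zero_left (ExteriorAlgebra.ι_add_mul_swap _ _)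
  rw [h]

/-- multiplication by `x_i` -/
def mx (i : Fin n) : MvPowerSeries (Fin n) ℂ →ₗ[ℂ] MvPowerSeries (Fin n) ℂ :=
  LinearMap.mulLeft ℂ (MvPowerSeries.X i)

/-- coefficientwise scaling -/
def sc (c : (Fin n →₀ ℕ) → ℂ) : MvPowerSeries (Fin n) ℂ →ₗ[ℂ] MvPowerSeries (Fin n) ℂ where
  toFun g := fun α => c α * MvPowerSeries.coeff α g
  map_add' a b := by ext α; exact mul_add (c α) (MvPowerSeries.coeff α a) (MvPowerSeries.coeff α b)
  map_smul' r a := by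
    ext α
    change c α * (r * MvPowerSeries.coeff α a) = r * (c α * MvPowerSeries.coeff α a)
    ring

lemma coeff_sc (c : (Fin n →₀ ℕ) → ℂ) (g : MvPowerSeries (Fin n) ℂ) (α : Fin n →₀ ℕ) :
    MvPowerSeries.coeff α (sc c g) = c α * MvPowerSeries.coeff α g := rfl

lemma coeff_pdL (i : Fin n) (g : MvPowerSeries (Fin n) ℂ) (α : Fin n →₀ ℕ) :
    MvPowerSeries.coeff α (pdL n i g) =
      ((α i : ℂ) + 1) * MvPowerSeries.coeff (α + Finsupp.single i 1) g := rfl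

lemma coeff_mx (i : Fin n) (g : MvPowerSeries (Fin n) ℂ) (α : Fin n →₀ ℕ) :
    MvPowerSeries.coeff α (mx i g) =
      if α i = 0 then 0 else MvPowerSeries.coeff (α - Finsupp.single i 1) g := by
  classical
  rw [mx, LinearMap.mulLeft_apply, MvPowerSeries.X, MvPowerSeries.coeff_monomial_mul]
  by_cases h : α i = 0
  · simp [h]
  · have : 1 ≤ α i := by omega
    simp [h, this]

lemma pd_mx (i j : Fin n) (g : MvPowerSeries (Fin n) ℂ) :
    pdL n j (mx i g) = (if i = j then g else 0) + mx i (pdL n j g) := by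
  classical
  ext α
  rw [map_add, coeff_pdL, coeff_mx, coeff_mx]
  by_cases hij : i = j
  · subst hij
    by_cases h : α i = 0
    · simp [h]
    · have hle : Finsupp.single i 1 ≤ α := by
        rw [Finsupp.single_le_iff]; omega
      simp only [coeff_pdL, h, if_false, if_true, tsub_add_cancel_of_le hle]
      have : (((α - Finsupp.single i 1 : Fin n →₀ ℕ) i : ℕ) : ℂ) = α i - 1 := by
        simp only [Finsupp.coe_tsub, Pi.sub_apply, Finsupp.single_eq_same]
        rw [Nat.cast_sub (by omega)]; simp
      rw [this]
      simp
      ring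
  · have h0 : (α + Finsupp.single j 1 : Fin n →₀ ℕ) i = α i := by
      simp [Finsupp.single_apply, Ne.symm hij]
    rw [h0]
    by_cases h : α i = 0
    · simp [h, hij]
    · have hle : Finsupp.single i 1 ≤ α := by
        rw [Finsupp.single_le_iff]; omega
      have h1 : (α - Finsupp.single i 1 : Fin n →₀ ℕ) j = α j := by
        simp [Finsupp.single_apply, hij]
      have h2 : α + Finsupp.single j 1 - Finsupp.single i 1
        = α - Finsupp.single i 1 + Finsupp.single j 1 := tsub_add_eq_add_tsub hle |>.symm
      simp [h, hij, coeff_pdL, h1, h2]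

lemma sum_mx_pd (g : MvPowerSeries (Fin n) ℂ) :
    ∑ i, mx i (pdL n i g) = sc (fun α => ∑ i, (α i : ℂ)) g := by
  classical
  ext α
  rw [map_sum, coeff_sc, Finset.sum_mul]
  refine Finset.sum_congr rfl fun i _ => ?_
  rw [coeff_mx]
  by_cases h : α i = 0
  · simp [h]
  · have hle : Finsupp.single i 1 ≤ α := by
      rw [Finsupp.single_le_iff]; omega
    simp only [coeff_pdL, h, if_false, tsub_add_cancel_of_le hle]
    have : (((α - Finsupp.single i 1 : Fin n →₀ ℕ) i : ℕ) : ℂ) = α i - 1 := by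
      simp only [Finsupp.coe_tsub, Pi.sub_apply, Finsupp.single_eq_same]
      rw [Nat.cast_sub (by omega)]; simp
    rw [this]; ring

lemma pd_comm (i j : Fin n) (g : MvPowerSeries (Fin n) ℂ) :
    pdL n i (pdL n j g) = pdL n j (pdL n i g) := by
  classical
  by_cases hij : i = j
  · rw [hij]
  ext α
  simp only [coeff_pdL, Finsupp.add_apply, Finsupp.single_apply, hij, Ne.symm hij, if_false]
  rw [add_right_comm]
  push_cast
  ring

/-- inverse of the Lie derivative -/
def kk (n p : ℕ) : MvPowerSeries (Fin n) ℂ →ₗ[ℂ] MvPowerSeries (Fin n) ℂ :=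
  sc (fun α => (∑ i, (α i : ℂ) + p)⁻¹)

lemma kk_pd (i : Fin n) (p : ℕ) (g : MvPowerSeries (Fin n) ℂ) :
    kk n (p+1) (pdL n i g) = pdL n i (kk n p g) := by
  classical
  ext α
  simp only [kk, coeff_sc, coeff_pdL, Finsupp.add_apply, Nat.cast_add, Finset.sum_add_distrib]
  have : ∑ x, ((Finsupp.single i 1 x : ℕ) : ℂ) = 1 := by
    simp [Finsupp.single_apply]
  rw [this]
  push_cast
  rw [add_assoc, add_comm (1:ℂ) p]
  ring

lemma kk_inv (p : ℕ) (g : MvPowerSeries (Fin n) ℂ) :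
    kk n (p+1) (sc (fun α => ∑ i, (α i : ℂ)) g + ((p:ℂ)+1) • g) = g := by
  ext α
  rw [kk, coeff_sc, map_add, coeff_sc, map_smul, smul_eq_mul, ← add_mul, ← mul_assoc]
  push_cast
  rw [inv_mul_cancel₀, one_mul]
  have : (∑ i, (α i : ℂ) + ((p:ℂ)+1)) = ((∑ i, α i + p + 1 : ℕ) : ℂ) := by push_cast; ring
  rw [this]
  exact Nat.cast_ne_zero.2 (by omega)

/-- homotopy operator -/
def H (n p : ℕ) : Omega n (p + 1) →ₗ[ℂ] Omega n p :=
  ∑ i : Fin n, TensorProduct.map (mx i) (ct n i p)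

lemma D_tmul (p : ℕ) (g : MvPowerSeries (Fin n) ℂ) (x : ⋀[ℂ]^p (Fin n → ℂ)) :
    D n p (g ⊗ₜ x) = ∑ i, pdL n i g ⊗ₜ wedgeE n i p x := by
  simp [D, LinearMap.sum_apply]

lemma H_tmul (p : ℕ) (g : MvPowerSeries (Fin n) ℂ) (x : ⋀[ℂ]^(p+1) (Fin n → ℂ)) :
    H n p (g ⊗ₜ x) = ∑ i, mx i g ⊗ₜ ct n i p x := by
  simp [H, LinearMap.sum_apply]

lemma cartan (p : ℕ) (g : MvPowerSeries (Fin n) ℂ) (x : ⋀[ℂ]^(p+1) (Fin n → ℂ)) :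
    D n p (H n p (g ⊗ₜ x)) + H n (p+1) (D n (p+1) (g ⊗ₜ x)) =
      (sc (fun α => ∑ i, (α i : ℂ)) g + ((p:ℂ)+1) • g) ⊗ₜ x := by
  rw [H_tmul, D_tmul, map_sum, map_sum]
  simp only [H_tmul, D_tmul, pd_mx, anti, TensorProduct.add_tmul, TensorProduct.tmul_sub,
    Finset.sum_add_distrib, Finset.sum_sub_distrib]
  have h1 : ∑ i : Fin n, ∑ j : Fin n, (if i = j then g else 0) ⊗ₜ[ℂ] wedgeE n j p (ct n i p x)
      = (((p:ℂ)+1) • g) ⊗ₜ x := by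
    have : ∀ i : Fin n, ∑ j : Fin n, (if i = j then g else 0) ⊗ₜ[ℂ] wedgeE n j p (ct n i p x)
        = g ⊗ₜ wedgeE n i p (ct n i p x) := by
      intro i
      rw [Finset.sum_eq_single i]
      · simp
      · intro b _ hb; simp [Ne.symm hb]
      · simp
    simp only [this]
    rw [← TensorProduct.tmul_sum, sum_wedge_ct, TensorProduct.smul_tmul]
  have h2 : ∑ j : Fin n, ∑ i : Fin n, mx i (pdL n j g) ⊗ₜ[ℂ] (if i = j then x else 0)
      = sc (fun α => ∑ i, (α i : ℂ)) g ⊗ₜ x := by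
    rw [← sum_mx_pd, TensorProduct.sum_tmul]
    refine Finset.sum_congr rfl fun j _ => ?_
    rw [Finset.sum_eq_single j]
    · simp
    · intro b _ hb; simp [hb]
    · simp
  rw [h1, h2, Finset.sum_comm (f := fun j i => mx i (pdL n j g) ⊗ₜ[ℂ] wedgeE n j p (ct n i p x))]
  abel

lemma cartan0 (g : MvPowerSeries (Fin n) ℂ) (x : ⋀[ℂ]^0 (Fin n → ℂ)) :
    H n 0 (D n 0 (g ⊗ₜ x)) = sc (fun α => ∑ i, (α i : ℂ)) g ⊗ₜ x := by
  rw [D_tmul, map_sum, ← sum_mx_pd, TensorProduct.sum_tmul]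
  refine Finset.sum_congr rfl fun j _ => ?_
  simp only [H_tmul, anti0]
  rw [Finset.sum_eq_single j]
  · simp
  · intro b _ hb; simp [hb]
  · simp

lemma kk_D (p : ℕ) (w : Omega n p) :
    TensorProduct.map (kk n (p+1)) LinearMap.id (D n p w) =
      D n p (TensorProduct.map (kk n p) LinearMap.id w) := by
  induction w using TensorProduct.induction_on with
  | zero => simp
  | add a b ha hb => simp only [map_add, ha, hb]
  | tmul g x => simp [D_tmul, kk_pd]

lemma homotopy (p : ℕ) (w : Omega n (p+1)) :
    TensorProduct.map (kk n (p+1)) LinearMap.id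
      (D n p (H n p w) + H n (p+1) (D n (p+1) w)) = w := by
  induction w using TensorProduct.induction_on with
  | zero => simp
  | add a b ha hb =>
    nth_rewrite 3 [← ha]
    nth_rewrite 3 [← hb]
    rw [← map_add]
    congr 1
    simp only [map_add]
    abel
  | tmul g x => rw [cartan, TensorProduct.map_tmul, kk_inv]; rfl

lemma ker_le_range (p : ℕ) (w : Omega n (p+1)) (hw : D n (p+1) w = 0) :
    ∃ v, D n p v = w := by
  refine ⟨TensorProduct.map (kk n p) LinearMap.id (H n p w), ?_⟩
  have h := homotopy p w
  rw [hw, map_zero, add_zero, kk_D] at h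
  exact h

lemma D_D (p : ℕ) (w : Omega n p) : D n (p+1) (D n p w) = 0 := by
  induction w using TensorProduct.induction_on with
  | zero => simp
  | add a b ha hb => simp only [map_add, ha, hb, add_zero]
  | tmul g x =>
    simp only [D_tmul, map_sum]
    have key : ∀ S : Omega n (p+1+1), S = -S → S = 0 := by
      intro S h
      have h2 : (2:ℂ) • S = 0 := by
        rw [two_smul]
        nth_rewrite 1 [h]
        exact neg_add_cancel S
      exact (smul_eq_zero.1 h2).resolve_left two_ne_zero
    refine key _ ?_
    conv_lhs => rw [Finset.sum_comm]
    rw [← Finset.sum_neg_distrib]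
    refine Finset.sum_congr rfl fun i _ => ?_
    rw [← Finset.sum_neg_distrib]
    refine Finset.sum_congr rfl fun j _ => ?_
    rw [pd_comm, wedge_swap, TensorProduct.tmul_neg]

lemma top_zero (w : Omega n (n+1)) : w = 0 := by
  have : Subsingleton (⋀[ℂ]^(n+1) (Fin n → ℂ)) := by
    rw [← Module.finrank_zero_iff (R := ℂ), exteriorPower.finrank_eq]
    simp
  induction w using TensorProduct.induction_on with
  | zero => simp
  | add a b ha hb => rw [ha, hb, add_zero]
  | tmul g x => rw [Subsingleton.elim x 0, TensorProduct.tmul_zero]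

lemma zero_form (w : Omega n 0) : ∃ g : MvPowerSeries (Fin n) ℂ, w = g ⊗ₜ one0 n := by
  induction w using TensorProduct.induction_on with
  | zero => exact ⟨0, by simp⟩
  | add a b ha hb =>
    obtain ⟨g, rfl⟩ := ha
    obtain ⟨h, rfl⟩ := hb
    exact ⟨g + h, by rw [TensorProduct.add_tmul]⟩
  | tmul g x =>
    obtain ⟨x, hx⟩ := x
    have hx' := hx
    rw [ExteriorAlgebra.exteriorPower, pow_zero] at hx'
    obtain ⟨r, hr⟩ := Submodule.mem_one.1 hx'
    have : (⟨x, hx⟩ : ⋀[ℂ]^0 (Fin n → ℂ)) = r • one0 n := by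
      apply Subtype.ext
      exact hr.symm.trans (Algebra.algebraMap_eq_smul_one r)
    exact ⟨r • g, by rw [this, TensorProduct.smul_tmul]⟩

lemma one0_ne : one0 n ≠ 0 := fun h => one_ne_zero (α := ExteriorAlgebra ℂ (Fin n → ℂ))
  (congrArg Subtype.val h)

lemma D_one : D n 0 ((1 : MvPowerSeries (Fin n) ℂ) ⊗ₜ one0 n) = 0 := by
  classical
  rw [D_tmul]
  refine Finset.sum_eq_zero fun i _ => ?_
  have : pdL n i 1 = 0 := by
    ext α
    rw [coeff_pdL, MvPowerSeries.coeff_one, if_neg]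
    · simp
    · intro h
      have := DFunLike.congr_fun h i
      simp at this
  rw [this, TensorProduct.zero_tmul]

lemma ker_zero (w : Omega n 0) (hw : D n 0 w = 0) :
    ∃ c : ℂ, c • ((1 : MvPowerSeries (Fin n) ℂ) ⊗ₜ one0 n) = w := by
  classical
  obtain ⟨g, rfl⟩ := zero_form w
  have h := cartan0 g (one0 n)
  rw [hw, map_zero] at h
  have h2 : sc (fun α => ∑ i, (α i : ℂ)) g = 0 := by
    have h5 := congrArg (fun z => TensorProduct.rid ℂ _
      (LinearMap.lTensor _ (exteriorPower.zeroEquiv ℂ (Fin n → ℂ)).toLinearMap z)) h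
    simp only [map_zero, LinearMap.lTensor_tmul, TensorProduct.rid_tmul,
      LinearEquiv.coe_coe] at h5
    exact (smul_eq_zero.1 h5.symm).resolve_left
      (fun h6 => one0_ne ((LinearEquiv.map_eq_zero_iff _).1 h6))
  refine ⟨MvPowerSeries.coeff 0 g, ?_⟩
  rw [TensorProduct.smul_tmul']
  congr 1
  ext α
  rw [map_smul, MvPowerSeries.coeff_one]
  split_ifs with hα
  · simp [hα]
  · have h3 := congrArg (MvPowerSeries.coeff α) h2
    rw [coeff_sc, map_zero] at h3
    have h4 : (∑ i, (α i : ℂ)) ≠ 0 := by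
      rw [← Nat.cast_sum]
      refine Nat.cast_ne_zero.2 fun h0 => hα ?_
      ext i
      exact (Finset.sum_eq_zero_iff.1 h0) i (Finset.mem_univ i)
    rw [(mul_eq_zero.1 h3).resolve_left h4]; simp

end PoincareAux

/-- **Formal Poincaré Lemma (full exactness).**  The sequence
`0 → ℂ → Ω^0 → Ω^1 → ⋯ → Ωⁿ → 0` given by the exterior derivative is exact:
the kernel of `d : Ω^0 → Ω^1` is exactly the line of constants `ℂ·(1 ⊗ 1)`,
for `1 ≤ p ≤ n-1` the kernel of `d : Ω^p → Ω^{p+1}` is the image of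
`d : Ω^{p-1} → Ω^p`, and `d : Ω^{n-1} → Ω^n` is surjective. -/
theorem formal_poincare_lemma (n : ℕ) (hn : 1 ≤ n) :
    LinearMap.ker (D n 0) =
        Submodule.span ℂ {(1 : MvPowerSeries (Fin n) ℂ) ⊗ₜ[ℂ] one0 n} ∧
    (∀ p : ℕ, 1 ≤ p + 1 → p + 1 ≤ n - 1 →
        LinearMap.ker (D n (p + 1)) = LinearMap.range (D n p)) ∧
    Function.Surjective (D n (n - 1)) := by
  refine ⟨?_, ?_, ?_⟩
  · ext w
    rw [LinearMap.mem_ker, Submodule.mem_span_singleton]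
    constructor
    · exact ker_zero w
    · rintro ⟨c, rfl⟩
      rw [map_smul, D_one, smul_zero]
  · intro p _ _
    ext w
    rw [LinearMap.mem_ker, LinearMap.mem_range]
    constructor
    · exact ker_le_range p w
    · rintro ⟨v, rfl⟩
      exact D_D p v
  · obtain ⟨m, rfl⟩ : ∃ m, n = m + 1 := ⟨n - 1, by omega⟩
    intro w
    exact ker_le_range m w (top_zero _)
end
end

section
/- Formal Poincaré Lemma in degree 1: if g₁,…,gₙ ∈ R satisfy ∂ᵢ(gⱼ) = ∂ⱼ(gᵢ) for all 1 ≤ i, j ≤ n, then there exists h ∈ R with gᵢ = ∂ᵢ(h) for all 1 ≤ i ≤ n. -/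
noncomputable section

/-- **Formal Poincaré Lemma in degree 1**: if `∂ᵢ(gⱼ) = ∂ⱼ(gᵢ)` for all `i, j`, then
there is a formal power series `h` with `gᵢ = ∂ᵢ(h)` for all `i`. -/
theorem formal_poincare_deg_one (n : ℕ) (hn : 1 ≤ n)
    (g : Fin n → MvPowerSeries (Fin n) ℂ)
    (hsym : ∀ i j : Fin n, pd i (g j) = pd j (g i)) :
    ∃ h : MvPowerSeries (Fin n) ℂ, ∀ i : Fin n, g i = pd i h := by
  classical
  refine ⟨fun α => if H : ∃ k, α k ≠ 0 then
    MvPowerSeries.coeff (α - Finsupp.single H.choose 1) (g H.choose) / (α H.choose : ℂ) else 0, ?_⟩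
  intro i
  ext α
  have H : ∃ k, (α + Finsupp.single i 1 : Fin n →₀ ℕ) k ≠ 0 := ⟨i, by simp⟩
  change _ = ((α i : ℂ) + 1) * (if H : ∃ k, (α + Finsupp.single i 1 : Fin n →₀ ℕ) k ≠ 0 then
    MvPowerSeries.coeff ((α + Finsupp.single i 1) - Finsupp.single H.choose 1) (g H.choose) /
      (((α + Finsupp.single i 1 : Fin n →₀ ℕ) H.choose : ℕ) : ℂ) else 0)
  rw [dif_pos H]
  have hk := H.choose_spec
  generalize H.choose = k at hk
  by_cases hki : k = i
  · subst hki
    have h0 : (α k : ℂ) + 1 ≠ 0 := by exact_mod_cast Nat.succ_ne_zero (α k)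
    rw [add_tsub_cancel_right]
    simp only [Finsupp.add_apply, Finsupp.single_eq_same, Nat.cast_add, Nat.cast_one]
    field_simp
  · have hak : α k ≠ 0 := by
      simpa [Finsupp.single_apply, Ne.symm hki] using hk
    obtain ⟨γ, rfl⟩ : ∃ γ, α = γ + Finsupp.single k 1 :=
      ⟨α - Finsupp.single k 1, (tsub_add_cancel_of_le (by
        simpa [Finsupp.single_le_iff] using Nat.one_le_iff_ne_zero.mpr hak)).symm⟩
    have h1 := congrArg (MvPowerSeries.coeff γ) (hsym i k)
    rw [coeff_pd, coeff_pd] at h1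
    have h0 : (γ k : ℂ) + 1 ≠ 0 := by exact_mod_cast Nat.succ_ne_zero (γ k)
    rw [add_right_comm, add_tsub_cancel_right]
    have e1 : (γ + Finsupp.single i 1 + Finsupp.single k 1 : Fin n →₀ ℕ) k = γ k + 1 := by
      simp [Finsupp.single_apply, Ne.symm hki]
    have e2 : (γ + Finsupp.single k 1 : Fin n →₀ ℕ) i = γ i := by
      simp [Finsupp.single_apply, hki]
    rw [e1, e2, Nat.cast_add, Nat.cast_one, ← mul_div_assoc, h1]
    field_simp
end
end

section
/- Formal Poincaré Lemma in degree n−1 (n ≥ 2): if g₁,…,gₙ ∈ R satisfy Σ_{i=1}^n ∂ᵢ(gᵢ) = 0, then the vector (g₁,…,gₙ) ∈ R^n lies in the additive subgroup of R^n generated by the elements ∂ⱼ(h)·eᵢ − ∂ᵢ(h)·eⱼ for h ∈ R and 1 ≤ i < j ≤ n, where e₁,…,eₙ denotes the standard basis of the free module R^n. -/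
noncomputable section

lemma pd_add' {σ : Type*} (i : σ) (f g : MvPowerSeries σ ℂ) :
    pd i (f + g) = pd i f + pd i g := by
  ext α
  simp only [coeff_pd, map_add]
  ring

lemma pd_zero' {σ : Type*} (i : σ) : pd i (0 : MvPowerSeries σ ℂ) = 0 := by
  ext α
  simp [coeff_pd]

lemma pd_sum' {σ ι : Type*} (i : σ) (s : Finset ι) (f : ι → MvPowerSeries σ ℂ) :
    pd i (∑ k ∈ s, f k) = ∑ k ∈ s, pd i (f k) := by
  ext α
  simp only [coeff_pd, map_sum, Finset.mul_sum]

lemma pd_comm' {σ : Type*} (i j : σ) (f : MvPowerSeries σ ℂ) :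
    pd i (pd j f) = pd j (pd i f) := by
  classical
  by_cases h : i = j
  · rw [h]
  ext α
  simp only [coeff_pd, Finsupp.add_apply, Finsupp.single_apply, h, Ne.symm h, if_false, add_zero]
  rw [add_right_comm]
  ring

/-- Formal antiderivative in the variable `i`. -/
def antid {σ : Type*} (i : σ) (g : MvPowerSeries σ ℂ) : MvPowerSeries σ ℂ :=
  fun α => if α i = 0 then 0 else MvPowerSeries.coeff (α - Finsupp.single i 1) g / (α i : ℂ)

lemma coeff_antid {σ : Type*} (i : σ) (g : MvPowerSeries σ ℂ) (α : σ →₀ ℕ) :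
    MvPowerSeries.coeff α (antid i g) =
      if α i = 0 then 0 else MvPowerSeries.coeff (α - Finsupp.single i 1) g / (α i : ℂ) := rfl

lemma pd_antid {σ : Type*} (i : σ) (g : MvPowerSeries σ ℂ) : pd i (antid i g) = g := by
  classical
  ext α
  rw [coeff_pd, coeff_antid]
  have h : (α i : ℂ) + 1 ≠ 0 := Nat.cast_add_one_ne_zero _
  simp
  field_simp

lemma pd_antid_eq_zero {σ : Type*} (i j : σ) (hij : i ≠ j) (g : MvPowerSeries σ ℂ)
    (hg : pd j g = 0) : pd j (antid i g) = 0 := by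
  classical
  ext α
  rw [coeff_pd, coeff_antid]
  by_cases h : α i = 0
  · simp [h, Finsupp.single_apply, hij.symm]
  have h1 := congrArg (MvPowerSeries.coeff (α - Finsupp.single i 1)) hg
  rw [coeff_pd] at h1
  have h2 : α + Finsupp.single j 1 - Finsupp.single i 1
      = α - Finsupp.single i 1 + Finsupp.single j 1 := by
    ext k
    simp only [Finsupp.tsub_apply, Finsupp.add_apply, Finsupp.single_apply]
    split_ifs <;> first | omega | (subst_vars; omega) | (subst_vars; exact absurd rfl hij)
  have h3 : MvPowerSeries.coeff (α - Finsupp.single i 1 + Finsupp.single j 1) g = 0 := by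
    rcases mul_eq_zero.mp h1 with h4 | h4
    · exact absurd h4 (Nat.cast_add_one_ne_zero _)
    · exact h4
  rw [h2, h3]
  simp

/-- **Formal Poincaré Lemma in degree n−1** (`n ≥ 2`): if `Σᵢ ∂ᵢ(gᵢ) = 0`, then the
vector `(g₁,…,gₙ) ∈ Rⁿ` lies in the additive subgroup of `Rⁿ` generated by the
elements `∂ⱼ(h)·eᵢ − ∂ᵢ(h)·eⱼ` for `h ∈ R` and `i < j`. -/
theorem formal_poincare_deg_pred (n : ℕ) (hn : 2 ≤ n)
    (g : Fin n → MvPowerSeries (Fin n) ℂ)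
    (hdiv : ∑ i : Fin n, pd i (g i) = 0) :
    g ∈ AddSubgroup.closure
      {v : Fin n → MvPowerSeries (Fin n) ℂ |
        ∃ (h : MvPowerSeries (Fin n) ℂ) (i j : Fin n), i < j ∧
          v = Pi.single i (pd j h) - Pi.single j (pd i h)} := by
  obtain ⟨m, rfl⟩ : ∃ m, n = m + 2 := ⟨n - 2, by omega⟩
  set h : Fin (m + 1) → MvPowerSeries (Fin (m + 2)) ℂ := fun i => antid 0 (g i.succ) with hh
  have hh0 : ∀ i, pd 0 (h i) = g i.succ := fun i => pd_antid _ _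
  set f := g 0 + ∑ i : Fin (m + 1), pd i.succ (h i) with hf
  have hf0 : pd 0 f = 0 := by
    have e : ∀ i ∈ (Finset.univ : Finset (Fin (m + 1))),
        pd 0 (pd i.succ (h i)) = pd i.succ (g i.succ) := fun i _ => by rw [pd_comm', hh0]
    rw [Fin.sum_univ_succ] at hdiv
    rw [hf, pd_add', pd_sum', Finset.sum_congr rfl e, hdiv]
  have h01 : (1 : Fin (m + 2)) ≠ 0 := by simp
  have hg : g = (Pi.single 0 (pd 1 (antid 1 f)) - Pi.single 1 (pd 0 (antid 1 f)))
      - ∑ i : Fin (m + 1), (Pi.single 0 (pd i.succ (h i)) - Pi.single i.succ (pd 0 (h i))) := by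
    rw [pd_antid, pd_antid_eq_zero 1 0 h01 f hf0]
    simp only [hh0]
    funext k
    refine Fin.cases ?_ (fun k => ?_) k
    · simp [hf, Finset.sum_apply, Pi.single_apply, (Fin.succ_ne_zero _).symm]
    · simp [Finset.sum_apply, Pi.single_apply]
  rw [hg]
  refine AddSubgroup.sub_mem _ (AddSubgroup.subset_closure ⟨_, 0, 1, ?_, rfl⟩)
    (AddSubgroup.sum_mem _ fun i _ => AddSubgroup.subset_closure ⟨_, 0, i.succ, ?_, rfl⟩)
  · exact Fin.pos_of_ne_zero h01
  · exact Fin.succ_pos i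
end
end
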